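/- Let T be a selfadjoint operator on a Hilbert space H and let T_r := T − r for r ∈ ℝ. Then Ȟ(T_r) = Ȟ(T) as sets, with equivalence of norms. -/

import Mathlib

/-
Common abstract framework for first-order elliptic boundary value problems
(Bär–Bandara style).  The spaces `HE`, `HF` play the role of the Hilbert spaces
`L²(M;E)`, `L²(M;F)` of square-integrable sections over the manifold `M`, and
`HB` the role of `L²(∂M;E)`.  Unbounded operators are modelled by `LinearPMap`.
-/

noncomputable section

open scoped ComplexInnerProductSpace

namespace BVP

variable {H₁ H₂ : Type*}
variable [NormedAddCommGroup H₁] [InnerProductSpace ℂ H₁]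
variable [NormedAddCommGroup H₂] [InnerProductSpace ℂ H₂]

/-- The graph norm `(‖u‖² + ‖Tu‖²)^(1/2)` of an element of the domain of an
unbounded operator `T`. -/
def graphNorm (T : H₁ →ₗ.[ℂ] H₂) (u : T.domain) : ℝ :=
  Real.sqrt (‖(u : H₁)‖ ^ 2 + ‖T u‖ ^ 2)

/-- A set `S ⊆ H₁` is dense in the domain of the unbounded operator `T` with
respect to the graph norm of `T`. -/
def DenseInGraphNorm (T : H₁ →ₗ.[ℂ] H₂) (S : Set H₁) : Prop :=
  ∀ u : T.domain, ∀ ε : ℝ, 0 < ε →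
    ∃ v : T.domain, (v : H₁) ∈ S ∧ graphNorm T (u - v) < ε

/-- Abstract spectral data for a selfadjoint *adapted boundary operator* `A` on
`HB = L²(∂M;E)` (condition (G1) of the geometric setup): `Pm`, `Pp` are the
spectral projections `χ⁻(A) = χ_{(-∞,0)}(A)` and `χ⁺(A) = χ_{[0,∞)}(A)`,
`absA = |A|` and `sqrtA = |A|^{1/2}`, so that `sqrtA.domain` is `dom |A|^{1/2}`. -/
structure AdaptedOperator (HB : Type*) [NormedAddCommGroup HB]
    [InnerProductSpace ℂ HB] [CompleteSpace HB] where
  /-- the (closure of the essentially) selfadjoint adapted operator `A` -/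
  A : HB →ₗ.[ℂ] HB
  dense_dom : Dense (A.domain : Set HB)
  selfadjoint : A.adjoint = A
  /-- the spectral projection `χ⁻(A) = χ_{(-∞,0)}(A)` -/
  Pm : HB →L[ℂ] HB
  /-- the spectral projection `χ⁺(A) = χ_{[0,∞)}(A)` -/
  Pp : HB →L[ℂ] HB
  Pm_idem : Pm.comp Pm = Pm
  Pp_idem : Pp.comp Pp = Pp
  Pm_sa : IsSelfAdjoint Pm
  Pp_sa : IsSelfAdjoint Pp
  compl : Pm + Pp = ContinuousLinearMap.id ℂ HB
  Pm_dom : ∀ u ∈ A.domain, Pm u ∈ A.domain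
  Pp_dom : ∀ u ∈ A.domain, Pp u ∈ A.domain
  Pm_comm : ∀ u : A.domain, A ⟨Pm u, Pm_dom u u.2⟩ = Pm (A u)
  neg_on_ranPm : ∀ u : A.domain, Pm (u : HB) = (u : HB) → (⟪A u, (u : HB)⟫).re ≤ 0
  pos_on_ranPp : ∀ u : A.domain, Pp (u : HB) = (u : HB) → 0 ≤ (⟪A u, (u : HB)⟫).re
  ker_sub_ranPp : ∀ u : A.domain, A u = 0 → Pp (u : HB) = (u : HB)
  neg_strict : ∀ u : A.domain, Pm (u : HB) = (u : HB) → A u = 0 → (u : HB) = 0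
  /-- the modulus `|A|` -/
  absA : HB →ₗ.[ℂ] HB
  absA_dom : absA.domain = A.domain
  absA_sa : absA.adjoint = absA
  absA_nonneg : ∀ u : absA.domain, 0 ≤ (⟪absA u, (u : HB)⟫).re
  absA_norm : ∀ (u : HB) (hA : u ∈ A.domain) (hB : u ∈ absA.domain),
    ‖absA ⟨u, hB⟩‖ = ‖A ⟨u, hA⟩‖
  /-- the square root `|A|^{1/2}` -/
  sqrtA : HB →ₗ.[ℂ] HB
  sqrtA_sa : sqrtA.adjoint = sqrtA
  sqrtA_nonneg : ∀ u : sqrtA.domain, 0 ≤ (⟪sqrtA u, (u : HB)⟫).re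
  absA_dom_le : absA.domain ≤ sqrtA.domain
  sqrtA_sq_mem : ∀ (u : HB) (h1 : u ∈ sqrtA.domain), u ∈ absA.domain →
    sqrtA ⟨u, h1⟩ ∈ sqrtA.domain
  sqrtA_sq : ∀ (u : HB) (hu : u ∈ absA.domain) (h1 : u ∈ sqrtA.domain)
    (h2 : sqrtA ⟨u, h1⟩ ∈ sqrtA.domain),
      sqrtA ⟨sqrtA ⟨u, h1⟩, h2⟩ = absA ⟨u, hu⟩
  Pm_half : ∀ u ∈ sqrtA.domain, Pm u ∈ sqrtA.domain
  Pp_half : ∀ u ∈ sqrtA.domain, Pp u ∈ sqrtA.domain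

namespace AdaptedOperator

variable {HB : Type*} [NormedAddCommGroup HB] [InnerProductSpace ℂ HB]
  [CompleteSpace HB]

/-- The graph norm of `dom |A|^{1/2}` (the `H^{1/2}(∂M;E)`-norm). -/
def halfNorm (S : AdaptedOperator HB) (u : S.sqrtA.domain) : ℝ :=
  Real.sqrt (‖(u : HB)‖ ^ 2 + ‖S.sqrtA u‖ ^ 2)

/-- The norm of the dual space `(dom |A|^{1/2})^*` (the `H^{-1/2}`-norm),
evaluated on elements of `HB = L²(∂M;E)`. -/
def dualNorm (S : AdaptedOperator HB) (u : HB) : ℝ :=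
  ⨆ v : {v : S.sqrtA.domain // S.halfNorm v ≤ 1}, ‖(⟪u, ((v : S.sqrtA.domain) : HB)⟫ : ℂ)‖

/-- The `Ȟ(A)`-norm `‖χ⁻(A)u‖_{dom |A|^{1/2}} + ‖χ⁺(A)u‖_{(dom |A|^{1/2})^*}`
evaluated on elements of `dom |A|^{1/2}`; the space
`Ȟ(A) = χ⁻(A) dom(|A|^{1/2}) ⊕ χ⁺(A) dom(|A|^{1/2})^*` is the completion of
`dom |A|^{1/2}` with respect to this norm. -/
def checkNorm (S : AdaptedOperator HB) (u : S.sqrtA.domain) : ℝ :=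
  S.halfNorm ⟨S.Pm u, S.Pm_half _ u.2⟩ + S.dualNorm (S.Pp u)

/-- The `Ĥ(A) = Ȟ(−A)`-norm on `dom |A|^{1/2}`. -/
def hatNorm (S : AdaptedOperator HB) (u : S.sqrtA.domain) : ℝ :=
  S.halfNorm ⟨S.Pp u, S.Pp_half _ u.2⟩ + S.dualNorm (S.Pm u)

end AdaptedOperator

/-- A Banach space `Hc`, together with a linear map `j : dom |A|^{1/2} → Hc`,
*realizes* `Ȟ(A)` if `j` is a dense embedding with `‖j u‖ = checkNorm u`;
this exhibits `Hc` as the completion of `dom |A|^{1/2}` in the `Ȟ(A)`-norm,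
i.e. as the space `Ȟ(A)`. -/
structure RealizesCheck {HB : Type*} [NormedAddCommGroup HB] [InnerProductSpace ℂ HB]
    [CompleteSpace HB] (S : AdaptedOperator HB) (Hc : Type*) [NormedAddCommGroup Hc]
    [NormedSpace ℂ Hc] (j : S.sqrtA.domain →ₗ[ℂ] Hc) : Prop where
  dense_range : DenseRange j
  norm_eq : ∀ u, ‖j u‖ = S.checkNorm u

/-- `Hh` together with `j` realizes `Ĥ(A) = Ȟ(−A)` as the completion of
`dom |A|^{1/2}` in the `Ĥ(A)`-norm. -/
structure RealizesHat {HB : Type*} [NormedAddCommGroup HB] [InnerProductSpace ℂ HB]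
    [CompleteSpace HB] (S : AdaptedOperator HB) (Hh : Type*) [NormedAddCommGroup Hh]
    [NormedSpace ℂ Hh] (j : S.sqrtA.domain →ₗ[ℂ] Hh) : Prop where
  dense_range : DenseRange j
  norm_eq : ∀ u, ‖j u‖ = S.hatNorm u

section Shift

variable {H : Type*} [NormedAddCommGroup H] [InnerProductSpace ℂ H] [CompleteSpace H]

/-! The bounded operators that commute with `T` together with their adjoints form a closed star
algebra, which contains `|Y|` along with each of its members `Y`. For `Y = χ⁺(T) X χ⁻(T)` with `X`
in this algebra, `|Y|` takes values in `ran χ⁻(T)`, hence `⟪T|Y|u, |Y|u⟫ ≤ 0`; but this number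
equals `⟪TYu, Yu⟫ ≥ 0`. The form of `T` on `ran χ⁺(T)` therefore vanishes at `Yu`, so `Y` kills
`ran T`, and `Y*` maps into `ker T ⊆ ran χ⁺(T)`, where it vanishes. Thus `χ⁺(T)` commutes with every
such `X`, and in particular with `χ⁻(T_r)`.

Consequently `R = χ⁻(T_r) χ⁺(T)` is a projection on whose range `0 ≤ T ≤ |r|`, so `R` maps `H` into
`dom T ⊆ dom |T|^{1/2}`. By the closed graph theorem and duality `R` is bounded from
`(dom |T|^{1/2})*` to `dom |T|^{1/2}`, and `χ⁻(T_r) u = χ⁻(T_r) χ⁻(T) u + R u` bounds the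
`χ⁻(T_r)`-part of the norm. The `χ⁺(T_r)`-part only needs the boundedness of `χ⁺(T_r)` on the dual
space. -/

section GraphNorm

variable (T : H₁ →ₗ.[ℂ] H₂)

theorem graphNorm_eq_norm_toLp (u : T.domain) :
    graphNorm T u = ‖WithLp.toLp 2 ((u : H₁), T u)‖ :=
  (WithLp.prod_norm_eq_of_L2 (WithLp.toLp 2 ((u : H₁), T u))).symm

theorem graphNorm_nonneg (u : T.domain) : 0 ≤ graphNorm T u :=
  Real.sqrt_nonneg _

theorem norm_le_graphNorm (u : T.domain) : ‖(u : H₁)‖ ≤ graphNorm T u :=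
  Real.le_sqrt_of_sq_le (le_add_of_nonneg_right (sq_nonneg _))

theorem norm_apply_le_graphNorm (u : T.domain) : ‖T u‖ ≤ graphNorm T u :=
  Real.le_sqrt_of_sq_le (le_add_of_nonneg_left (sq_nonneg _))

theorem graphNorm_le_norm_add_norm_apply (u : T.domain) : graphNorm T u ≤ ‖(u : H₁)‖ + ‖T u‖ :=
  Real.sqrt_le_iff.2 ⟨by positivity, by
    nlinarith [mul_nonneg (norm_nonneg (u : H₁)) (norm_nonneg (T u))]⟩

theorem graphNorm_add_le (u v : T.domain) :
    graphNorm T (u + v) ≤ graphNorm T u + graphNorm T v := by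
  simp only [graphNorm_eq_norm_toLp, Submodule.coe_add, T.map_add, ← Prod.mk_add_mk,
    WithLp.toLp_add]
  exact norm_add_le _ _

theorem graphNorm_smul (c : ℂ) (u : T.domain) : graphNorm T (c • u) = ‖c‖ * graphNorm T u := by
  simp only [graphNorm_eq_norm_toLp, Submodule.coe_smul, T.map_smul, ← Prod.smul_mk,
    WithLp.toLp_smul, norm_smul]

end GraphNorm

section ClosedGraph

theorem exists_norm_apply_le_of_isClosed {𝕜 E F G : Type*} [NontriviallyNormedField 𝕜]
    [NormedAddCommGroup E] [NormedSpace 𝕜 E] [CompleteSpace E]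
    [NormedAddCommGroup F] [NormedSpace 𝕜 F]
    [NormedAddCommGroup G] [NormedSpace 𝕜 G] [CompleteSpace G]
    {T : F →ₗ.[𝕜] G} (hT : T.IsClosed) (B : E →L[𝕜] F) (hB : ∀ u, B u ∈ T.domain) :
    ∃ C, 0 ≤ C ∧ ∀ u, ‖T ⟨B u, hB u⟩‖ ≤ C * ‖u‖ := by
  let TB : E →ₗ[𝕜] G := T.toFun ∘ₗ (B : E →ₗ[𝕜] F).codRestrict T.domain hB
  have graph_eq : (TB.graph : Set (E × G)) = Prod.map B id ⁻¹' T.graph := by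
    ext ⟨u, g⟩
    have hu := T.mem_graph ⟨B u, hB u⟩
    refine ⟨fun h => ?_, fun h => T.mem_graph_snd_inj h hu rfl⟩
    obtain rfl : g = TB u := (TB.mem_graph_iff _).1 h
    exact hu
  have cont : Continuous TB := TB.continuous_of_isClosed_graph <|
    graph_eq ▸ IsClosed.preimage (by fun_prop) hT
  let φ : E →L[𝕜] G := ⟨TB, cont⟩
  exact ⟨‖φ‖, norm_nonneg _, φ.le_opNorm⟩

variable {E H₃ H₄ : Type*} [NormedAddCommGroup E] [NormedSpace ℂ E] [CompleteSpace E]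
  [NormedAddCommGroup H₃] [InnerProductSpace ℂ H₃]
  [NormedAddCommGroup H₄] [InnerProductSpace ℂ H₄]

theorem exists_graphNorm_apply_le_norm [CompleteSpace H₂] {T : H₁ →ₗ.[ℂ] H₂} (hT : T.IsClosed)
    (B : E →L[ℂ] H₁) (hB : ∀ u, B u ∈ T.domain) :
    ∃ C, 0 ≤ C ∧ ∀ u, graphNorm T ⟨B u, hB u⟩ ≤ C * ‖u‖ := by
  obtain ⟨C, hC, bound⟩ := exists_norm_apply_le_of_isClosed hT B hB
  refine ⟨‖B‖ + C, by positivity, fun u => ?_⟩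
  calc graphNorm T ⟨B u, hB u⟩ ≤ ‖B u‖ + ‖T ⟨B u, hB u⟩‖ := graphNorm_le_norm_add_norm_apply T _
    _ ≤ ‖B‖ * ‖u‖ + C * ‖u‖ := add_le_add (B.le_opNorm u) (bound u)
    _ = (‖B‖ + C) * ‖u‖ := by ring

theorem exists_graphNorm_apply_le_graphNorm [CompleteSpace H₁] [CompleteSpace H₂]
    [CompleteSpace H₄] {T : H₁ →ₗ.[ℂ] H₂} {T' : H₃ →ₗ.[ℂ] H₄} (hT : T.IsClosed)
    (hT' : T'.IsClosed) (B : H₁ →L[ℂ] H₃) (hB : ∀ u ∈ T.domain, B u ∈ T'.domain) :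
    ∃ C, 0 ≤ C ∧ ∀ u : T.domain, graphNorm T' ⟨B u, hB u u.2⟩ ≤ C * graphNorm T u := by
  have : CompleteSpace T.graph := IsClosed.completeSpace_coe (hs := hT)
  obtain ⟨C, hC, bound⟩ := exists_graphNorm_apply_le_norm hT'
    (B ∘L ContinuousLinearMap.fst ℂ H₁ H₂ ∘L T.graph.subtypeL)
    fun p => hB _ (LinearPMap.mem_domain_of_mem_graph p.2)
  refine ⟨C, hC, fun u => (bound ⟨((u : H₁), T u), T.mem_graph u⟩).trans ?_⟩
  gcongr
  exact max_le (norm_le_graphNorm T u) (norm_apply_le_graphNorm T u)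

end ClosedGraph

section Commutant

variable {T : H →ₗ.[ℂ] H} {X : H →L[ℂ] H}

/-- The commutant of an unbounded operator `T`: the bounded operators `X` such that `X T ⊆ T X`
and `X* T ⊆ T X*`, encoded as invariance of the graph of `T` under `X × X` and `X* × X*`. -/
def commutant (T : H →ₗ.[ℂ] H) : StarSubalgebra ℂ (H →L[ℂ] H) where
  carrier := {X | ∀ u f, (u, f) ∈ T.graph →
    (X u, X f) ∈ T.graph ∧ (star X u, star X f) ∈ T.graph}
  mul_mem' hX hY u f h :=
    ⟨(hX _ _ (hY _ _ h).1).1, by rw [star_mul]; exact (hY _ _ (hX _ _ h).2).2⟩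
  add_mem' hX hY u f h :=
    ⟨T.graph.add_mem (hX _ _ h).1 (hY _ _ h).1,
      by rw [star_add]; exact T.graph.add_mem (hX _ _ h).2 (hY _ _ h).2⟩
  algebraMap_mem' c u f h := by
    simp only [Algebra.algebraMap_eq_smul_one, star_smul, star_one]
    exact ⟨T.graph.smul_mem c h, T.graph.smul_mem (star c) h⟩
  star_mem' hX u f h := ⟨(hX _ _ h).2, by rw [star_star]; exact (hX _ _ h).1⟩

theorem apply_mem_graph_of_mem_commutant (hX : X ∈ commutant T) {u f : H} (h : (u, f) ∈ T.graph) :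
    (X u, X f) ∈ T.graph :=
  (hX u f h).1

theorem isClosed_commutant (hT : T.IsClosed) : IsClosed (commutant T : Set (H →L[ℂ] H)) := by
  have closed_of_mem (p : H × H) : IsClosed {X : H →L[ℂ] H | (X p.1, X p.2) ∈ T.graph} :=
    IsClosed.preimage (f := fun X : H →L[ℂ] H => (X p.1, X p.2)) (by fun_prop) hT
  have commutant_eq : (commutant T : Set (H →L[ℂ] H)) = ⋂ p ∈ T.graph,
      {X | (X p.1, X p.2) ∈ T.graph} ∩ star ⁻¹' {X | (X p.1, X p.2) ∈ T.graph} := by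
    ext X
    simp only [Set.mem_iInter₂, Prod.forall]
    rfl
  rw [commutant_eq]
  exact isClosed_biInter fun p _ =>
    (closed_of_mem p).inter ((closed_of_mem p).preimage continuous_star)

theorem abs_mem_commutant (hT : T.IsClosed) (hX : X ∈ commutant T) :
    CFC.abs X ∈ commutant T := by
  rw [CFC.abs, CFC.sqrt_eq_real_sqrt _ (star_mul_self_nonneg X)]
  have : IsClosed (commutant T : Set (H →L[ℂ] H)) := isClosed_commutant hT
  exact cfcₙ_mem _ (mul_mem (star_mem hX) hX)

end Commutant

section QuadraticForm

variable {T : H →ₗ.[ℂ] H} {P : H →L[ℂ] H} {u f v g : H}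

theorem mem_graph_iff_of_isSelfAdjoint (hT : IsSelfAdjoint T) :
    (u, f) ∈ T.graph ↔ ∀ v g, (v, g) ∈ T.graph → ⟪f, v⟫ = ⟪u, g⟫ := by
  have graph_adjoint := LinearPMap.adjoint_graph_eq_graph_adjoint hT.dense_domain
  rw [LinearPMap.isSelfAdjoint_def.1 hT] at graph_adjoint
  nth_rw 1 [graph_adjoint]
  simp only [Submodule.mem_adjoint_iff, sub_eq_zero]
  refine forall₃_congr fun v g _ => ?_
  rw [← inner_conj_symm g u, ← inner_conj_symm v f, (starRingEnd ℂ).injective.eq_iff, eq_comm]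

theorem norm_inner_apply_sq_le (hT : IsSelfAdjoint T) (hP : IsSelfAdjoint P)
    (hPT : P ∈ commutant T) (nonneg : ∀ u f, (u, f) ∈ T.graph → 0 ≤ (⟪f, P u⟫).re)
    (hu : (u, f) ∈ T.graph) (hv : (v, g) ∈ T.graph) :
    ‖⟪f, P v⟫‖ ^ 2 ≤ (⟪f, P u⟫).re * (⟪g, P v⟫).re := by
  have inner_comm {u f v g : H} (hu : (u, f) ∈ T.graph) (hv : (v, g) ∈ T.graph) :
      starRingEnd ℂ ⟪g, P u⟫ = ⟪f, P v⟫ := by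
    rw [inner_conj_symm,
      (mem_graph_iff_of_isSelfAdjoint hT).1 hu _ _ (apply_mem_graph_of_mem_commutant hPT hv)]
    exact hP.isSymmetric u g
  let form : PreInnerProductSpace.Core ℂ T.graph :=
    { inner p q := ⟪p.1.2, P q.1.1⟫
      conj_inner_symm p q := inner_comm p.2 q.2
      re_inner_nonneg p := nonneg _ _ p.2
      add_left _ _ _ := inner_add_left _ _ _
      smul_left _ _ _ := inner_smul_left _ _ _ }
  calc ‖⟪f, P v⟫‖ ^ 2 = ‖⟪f, P v⟫‖ * ‖⟪g, P u⟫‖ := by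
        rw [sq, ← inner_comm hu hv, RCLike.norm_conj]
    _ ≤ (⟪f, P u⟫).re * (⟪g, P v⟫).re :=
        InnerProductSpace.Core.inner_mul_inner_self_le (c := form) ⟨_, hu⟩ ⟨_, hv⟩

theorem apply_eq_zero_of_re_inner_eq_zero (hT : IsSelfAdjoint T) (hP : IsSelfAdjoint P)
    (hPT : P ∈ commutant T) (nonneg : ∀ u f, (u, f) ∈ T.graph → 0 ≤ (⟪f, P u⟫).re)
    (hu : (u, f) ∈ T.graph) (zero : (⟪f, P u⟫).re = 0) : P f = 0 := by
  refine hT.dense_domain.eq_zero_of_inner_left ℂ fun w hw => ?_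
  have form_sq_le := norm_inner_apply_sq_le hT hP hPT nonneg hu (T.mem_graph ⟨w, hw⟩)
  rw [zero, zero_mul] at form_sq_le
  calc ⟪P f, w⟫ = ⟪f, P w⟫ := hP.isSymmetric f w
    _ = 0 := norm_eq_zero.1 (sq_nonpos_iff _ |>.1 form_sq_le)

theorem norm_le_of_forall_norm_inner_le {s : Set H₁} (hs : Dense s) {f : H₁} {M : ℝ} (hM : 0 ≤ M)
    (bound : ∀ w ∈ s, ‖⟪f, w⟫‖ ≤ M * ‖w‖) : ‖f‖ ≤ M := by
  have closed : IsClosed {w : H₁ | ‖⟪f, w⟫‖ ≤ M * ‖w‖} :=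
    isClosed_le (by fun_prop) (by fun_prop)
  rw [← innerSL_apply_norm ℂ f]
  exact (innerSL ℂ f).opNorm_le_bound hM fun w => closed.closure_subset_iff.2 bound (hs w)

theorem norm_apply_le_of_re_inner_le (hT : IsSelfAdjoint T) (hP : IsSelfAdjoint P)
    (hPT : P ∈ commutant T) (nonneg : ∀ u f, (u, f) ∈ T.graph → 0 ≤ (⟪f, P u⟫).re)
    {c : ℝ} (hc : 0 ≤ c) (bound : ∀ u f, (u, f) ∈ T.graph → (⟪f, P u⟫).re ≤ c * ‖u‖ ^ 2)
    (hu : (u, f) ∈ T.graph) : ‖P f‖ ≤ c * ‖u‖ := by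
  refine norm_le_of_forall_norm_inner_le hT.dense_domain (by positivity) fun w hw => ?_
  have hw := T.mem_graph ⟨w, hw⟩
  refine le_of_sq_le_sq ?_ (by positivity)
  calc ‖⟪P f, w⟫‖ ^ 2 = ‖⟪f, P w⟫‖ ^ 2 := congrArg (‖·‖ ^ 2) (hP.isSymmetric f w)
    _ ≤ (⟪f, P u⟫).re * (⟪T ⟨w, _⟩, P w⟫).re := norm_inner_apply_sq_le hT hP hPT nonneg hu hw
    _ ≤ (c * ‖u‖ ^ 2) * (c * ‖w‖ ^ 2) :=
        mul_le_mul (bound _ _ hu) (bound _ _ hw) (nonneg _ _ hw) (by positivity)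
    _ = (c * ‖u‖ * ‖w‖) ^ 2 := by ring

theorem apply_mem_domain_of_norm_apply_le (hT : IsSelfAdjoint T) (hP : IsSelfAdjoint P) {c : ℝ}
    (bound : ∀ u f, (u, f) ∈ T.graph → ‖P f‖ ≤ c * ‖u‖) (u : H) : P u ∈ T.domain := by
  rw [← LinearPMap.isSelfAdjoint_def.1 hT, LinearPMap.mem_adjoint_domain_iff]
  refine AddMonoidHomClass.continuous_of_bound _ (‖u‖ * c) fun v => ?_
  calc ‖⟪P u, T v⟫‖ = ‖⟪u, P (T v)⟫‖ := congrArg norm (hP.isSymmetric u (T v))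
    _ ≤ ‖u‖ * ‖P (T v)‖ := norm_inner_le_norm _ _
    _ ≤ ‖u‖ * (c * ‖v‖) := by gcongr; exact bound _ _ (T.mem_graph v)
    _ = ‖u‖ * c * ‖v‖ := (mul_assoc _ _ _).symm

end QuadraticForm

section ScalarShift

theorem mem_graph_vadd_iff {R M N : Type*} [Ring R] [AddCommGroup M] [Module R M]
    [AddCommGroup N] [Module R N] {L : M →ₗ[R] N} {T : M →ₗ.[R] N} {u : M} {f : N} :
    (u, f) ∈ (L +ᵥ T).graph ↔ (u, f - L u) ∈ T.graph := by
  constructor <;> intro h <;> obtain ⟨⟨v, hv⟩, rfl, hf⟩ := (LinearPMap.mem_graph_iff _).1 h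
  · obtain rfl : L v + T ⟨v, hv⟩ = f := hf
    exact (add_sub_cancel_left (L v) (T ⟨v, hv⟩)).symm ▸ T.mem_graph ⟨v, hv⟩
  · exact (LinearPMap.mem_graph_iff _).2 ⟨⟨v, hv⟩, rfl, add_eq_of_eq_sub' hf⟩

theorem commutant_le_commutant_smul_id_vadd (T : H →ₗ.[ℂ] H) (c : ℂ) :
    commutant T ≤ commutant ((c • LinearMap.id : H →ₗ[ℂ] H) +ᵥ T) := by
  intro X hX u f h
  simp only [mem_graph_vadd_iff, LinearMap.smul_apply, LinearMap.id_apply, ← map_smul,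
    ← map_sub] at h ⊢
  exact hX _ _ h

end ScalarShift

section StarProjection

theorem cfcAbs_mul_eq_zero {A : Type*} [NonUnitalCStarAlgebra A] [PartialOrder A]
    [StarOrderedRing A] {a b : A} (h : a * b = 0) : CFC.abs a * b = 0 := by
  rw [← CStarRing.star_mul_self_eq_zero_iff, star_mul, (CFC.abs_nonneg a).isSelfAdjoint.star_eq,
    mul_assoc, ← mul_assoc (CFC.abs a), CFC.abs_mul_abs, mul_assoc, h, mul_zero, mul_zero]

variable {P : H →L[ℂ] H}

theorem inner_apply_apply_of_isStarProjection (hP : IsStarProjection P) (f u : H) :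
    ⟪P f, P u⟫ = ⟪f, P u⟫ :=
  calc ⟪P f, P u⟫ = ⟪f, P (P u)⟫ := hP.isSelfAdjoint.isSymmetric f (P u)
    _ = ⟪f, P u⟫ := congrArg (⟪f, ·⟫) (DFunLike.congr_fun hP.isIdempotentElem.eq u)

theorem norm_apply_le_of_isStarProjection (hP : IsStarProjection P) (u : H) :
    ‖P u‖ ≤ ‖u‖ :=
  (P.le_of_opNorm_le hP.norm_le u).trans_eq (one_mul _)

end StarProjection

namespace AdaptedOperator

section SpectralProjections

variable (S : AdaptedOperator H) {X : H →L[ℂ] H} {u f : H}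

theorem isSelfAdjoint_A : IsSelfAdjoint S.A :=
  S.selfadjoint

theorem isStarProjection_Pm : IsStarProjection S.Pm :=
  ⟨S.Pm_idem, S.Pm_sa⟩

theorem isStarProjection_Pp : IsStarProjection S.Pp :=
  ⟨S.Pp_idem, S.Pp_sa⟩

theorem Pp_eq_one_sub_Pm : S.Pp = 1 - S.Pm :=
  eq_sub_of_add_eq' S.compl

theorem Pm_mul_Pp : S.Pm * S.Pp = 0 := by
  rw [Pp_eq_one_sub_Pm, S.isStarProjection_Pm.isIdempotentElem.mul_one_sub_self]

theorem Pm_apply_add_Pp_apply (u : H) : S.Pm u + S.Pp u = u :=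
  DFunLike.congr_fun S.compl u

theorem Pm_mem_commutant : S.Pm ∈ commutant S.A := by
  have apply_mem (u f : H) (h : (u, f) ∈ S.A.graph) : (S.Pm u, S.Pm f) ∈ S.A.graph := by
    obtain ⟨v, rfl, rfl⟩ := (LinearPMap.mem_graph_iff _).1 h
    exact S.Pm_comm v ▸ S.A.mem_graph ⟨S.Pm v, S.Pm_dom v v.2⟩
  exact fun u f h => ⟨apply_mem u f h, S.Pm_sa.star_eq.symm ▸ apply_mem u f h⟩

theorem Pp_mem_commutant : S.Pp ∈ commutant S.A :=
  S.Pp_eq_one_sub_Pm ▸ sub_mem (one_mem _) S.Pm_mem_commutant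

theorem re_inner_Pm_nonpos (h : (u, f) ∈ S.A.graph) : (⟪f, S.Pm u⟫).re ≤ 0 := by
  obtain ⟨⟨_, mem⟩, rfl, hf⟩ := (LinearPMap.mem_graph_iff _).1
    (apply_mem_graph_of_mem_commutant S.Pm_mem_commutant h)
  rw [← inner_apply_apply_of_isStarProjection S.isStarProjection_Pm,
    show S.Pm f = S.A ⟨S.Pm u, mem⟩ from hf.symm]
  exact S.neg_on_ranPm ⟨S.Pm u, mem⟩ (DFunLike.congr_fun S.Pm_idem u)

theorem re_inner_Pp_nonneg (h : (u, f) ∈ S.A.graph) : 0 ≤ (⟪f, S.Pp u⟫).re := by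
  obtain ⟨⟨_, mem⟩, rfl, hf⟩ := (LinearPMap.mem_graph_iff _).1
    (apply_mem_graph_of_mem_commutant S.Pp_mem_commutant h)
  rw [← inner_apply_apply_of_isStarProjection S.isStarProjection_Pp,
    show S.Pp f = S.A ⟨S.Pp u, mem⟩ from hf.symm]
  exact S.pos_on_ranPp ⟨S.Pp u, mem⟩ (DFunLike.congr_fun S.Pp_idem u)

theorem Pp_apply_eq_self_of_mem_graph_zero (h : (u, 0) ∈ S.A.graph) : S.Pp u = u := by
  obtain ⟨v, rfl, hv⟩ := (LinearPMap.mem_graph_iff _).1 h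
  exact S.ker_sub_ranPp v hv

theorem apply_eq_zero_of_mem_commutant_of_Pp_mul_of_mul_Pp (hX : X ∈ commutant S.A)
    (hXp : S.Pp * X = X) (hXm : X * S.Pp = 0) (h : (u, f) ∈ S.A.graph) : X f = 0 := by
  have hXu := apply_mem_graph_of_mem_commutant hX h
  have Pp_X (w : H) : S.Pp (X w) = X w := DFunLike.congr_fun hXp w
  have Pm_abs (w : H) : S.Pm (CFC.abs X w) = CFC.abs X w := by
    have : S.Pp * CFC.abs X = 0 := by
      simpa only [star_mul, S.Pp_sa.star_eq, (CFC.abs_nonneg X).isSelfAdjoint.star_eq, star_zero]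
        using congrArg star (cfcAbs_mul_eq_zero hXm)
    simpa only [show S.Pp (CFC.abs X w) = 0 from DFunLike.congr_fun this w, add_zero] using
      S.Pm_apply_add_Pp_apply (CFC.abs X w)
  have inner_eq : ⟪X f, X u⟫ = ⟪CFC.abs X f, CFC.abs X u⟫ :=
    calc ⟪X f, X u⟫ = ⟪f, (star X * X) u⟫ :=
        (ContinuousLinearMap.adjoint_inner_right X f (X u)).symm
      _ = ⟪f, CFC.abs X (CFC.abs X u)⟫ := by rw [← CFC.abs_mul_abs]; rfl
      _ = ⟪CFC.abs X f, CFC.abs X u⟫ :=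
        ((CFC.abs_nonneg X).isSelfAdjoint.isSymmetric f (CFC.abs X u)).symm
  have nonpos : (⟪X f, S.Pp (X u)⟫).re ≤ 0 := by
    have := S.re_inner_Pm_nonpos (apply_mem_graph_of_mem_commutant
      (abs_mem_commutant S.isSelfAdjoint_A.isClosed hX) h)
    rwa [Pp_X, inner_eq, ← Pm_abs u]
  rw [← Pp_X]
  exact apply_eq_zero_of_re_inner_eq_zero S.isSelfAdjoint_A S.Pp_sa S.Pp_mem_commutant
    (fun _ _ => S.re_inner_Pp_nonneg) hXu (nonpos.antisymm (S.re_inner_Pp_nonneg hXu))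

theorem Pp_mul_mul_Pm_eq_zero (hX : X ∈ commutant S.A) : S.Pp * X * S.Pm = 0 := by
  set Y := S.Pp * X * S.Pm with hY
  have mem : Y ∈ commutant S.A := mul_mem (mul_mem S.Pp_mem_commutant hX) S.Pm_mem_commutant
  have Pp_mul : S.Pp * Y = Y := by
    rw [hY, ← mul_assoc, ← mul_assoc, S.isStarProjection_Pp.isIdempotentElem.eq]
  have mul_Pp : Y * S.Pp = 0 := by rw [hY, mul_assoc, S.Pm_mul_Pp, mul_zero]
  have Pp_mul_star : S.Pp * star Y = 0 := by
    rw [← star_eq_zero, star_mul, star_star, S.Pp_sa.star_eq, mul_Pp]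
  rw [← star_eq_zero]
  ext u
  have ker : (star Y u, 0) ∈ S.A.graph :=
    (mem_graph_iff_of_isSelfAdjoint S.isSelfAdjoint_A).2 fun v g h => by
      rw [inner_zero_left, ContinuousLinearMap.star_eq_adjoint,
        ContinuousLinearMap.adjoint_inner_left,
        S.apply_eq_zero_of_mem_commutant_of_Pp_mul_of_mul_Pp mem Pp_mul mul_Pp h, inner_zero_right]
  rw [← S.Pp_apply_eq_self_of_mem_graph_zero ker]
  exact DFunLike.congr_fun Pp_mul_star u

theorem commute_Pp_of_mem_commutant (hX : X ∈ commutant S.A) : Commute X S.Pp := by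
  have hpm : S.Pp * X * S.Pm = 0 := S.Pp_mul_mul_Pm_eq_zero hX
  have hmp : S.Pm * X * S.Pp = 0 := by
    simpa only [star_mul, star_star, star_zero, S.Pm_sa.star_eq, S.Pp_sa.star_eq, mul_assoc] using
      congrArg star (S.Pp_mul_mul_Pm_eq_zero (star_mem hX))
  have hm : S.Pm = 1 - S.Pp := eq_sub_of_add_eq S.compl
  rw [hm, mul_sub, mul_one, sub_eq_zero] at hpm
  rw [hm, sub_mul, one_mul, sub_mul, sub_eq_zero] at hmp
  exact hmp.trans hpm.symm

end SpectralProjections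

section Smoothing

variable {S S' : AdaptedOperator H} {r : ℝ} {u f : H}
  (hS : S'.A = ((r : ℂ) • LinearMap.id : H →ₗ[ℂ] H) +ᵥ S.A)
include hS

theorem Pm_mem_commutant_of_shift : S'.Pm ∈ commutant S.A := by
  rw [← neg_vadd_eq_iff.2 hS, ← neg_smul]
  exact commutant_le_commutant_smul_id_vadd _ _ S'.Pm_mem_commutant

theorem isStarProjection_Pm_mul_Pp : IsStarProjection (S'.Pm * S.Pp) :=
  S'.isStarProjection_Pm.mul S.isStarProjection_Pp
    (S.commute_Pp_of_mem_commutant (Pm_mem_commutant_of_shift hS))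

theorem re_inner_Pm_mul_Pp_mem_Icc (h : (u, f) ∈ S.A.graph) :
    (⟪f, (S'.Pm * S.Pp) u⟫).re ∈ Set.Icc 0 (|r| * ‖u‖ ^ 2) := by
  set R := S'.Pm * S.Pp with hR
  have projection : IsStarProjection R := isStarProjection_Pm_mul_Pp hS
  have mem_graph : (R u, R f) ∈ S.A.graph := apply_mem_graph_of_mem_commutant
    (mul_mem (Pm_mem_commutant_of_shift hS) S.Pp_mem_commutant) h
  have Pm_R : S'.Pm (R u) = R u := DFunLike.congr_fun S'.Pm_idem (S.Pp u)
  have Pp_R : S.Pp (R u) = R u := by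
    have commute : Commute S'.Pm S.Pp :=
      S.commute_Pp_of_mem_commutant (Pm_mem_commutant_of_shift hS)
    have : S.Pp * R = R := by
      rw [hR, commute.eq, ← mul_assoc, S.isStarProjection_Pp.isIdempotentElem.eq]
    exact DFunLike.congr_fun this u
  rw [← inner_apply_apply_of_isStarProjection projection]
  refine ⟨Pp_R ▸ S.re_inner_Pp_nonneg mem_graph, ?_⟩
  have mem_graph' : (R u, R f + (r : ℂ) • R u) ∈ S'.A.graph := by
    rw [hS, mem_graph_vadd_iff]
    simpa using mem_graph
  have nonpos : (⟪R f, R u⟫).re + r * ‖R u‖ ^ 2 ≤ 0 := by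
    have := S'.re_inner_Pm_nonpos mem_graph'
    rw [Pm_R, inner_add_left, inner_smul_left, inner_self_eq_norm_sq_to_K] at this
    simpa [← Complex.ofReal_pow] using this
  have norm_R : ‖R u‖ ≤ ‖u‖ := norm_apply_le_of_isStarProjection projection u
  calc (⟪R f, R u⟫).re ≤ -r * ‖R u‖ ^ 2 := by linarith
    _ ≤ |r| * ‖u‖ ^ 2 := by gcongr; exact neg_le_abs r

theorem Pm_mul_Pp_apply_mem_domain (u : H) : S'.Pm (S.Pp u) ∈ S.A.domain := by
  have R_sa := (isStarProjection_Pm_mul_Pp hS).isSelfAdjoint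
  exact apply_mem_domain_of_norm_apply_le S.isSelfAdjoint_A R_sa
    (fun _ _ h => norm_apply_le_of_re_inner_le S.isSelfAdjoint_A R_sa
      (mul_mem (Pm_mem_commutant_of_shift hS) S.Pp_mem_commutant)
      (fun _ _ h => (re_inner_Pm_mul_Pp_mem_Icc hS h).1) (abs_nonneg r)
      (fun _ _ h => (re_inner_Pm_mul_Pp_mem_Icc hS h).2) h) u

end Smoothing

section Norms

variable (S : AdaptedOperator H) {u : H}

theorem isClosed_sqrtA : S.sqrtA.IsClosed :=
  IsSelfAdjoint.isClosed S.sqrtA_sa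

theorem A_domain_le_sqrtA_domain : S.A.domain ≤ S.sqrtA.domain :=
  S.absA_dom.symm.trans_le S.absA_dom_le

theorem halfNorm_eq_graphNorm (w : S.sqrtA.domain) : S.halfNorm w = graphNorm S.sqrtA w :=
  rfl

theorem halfNorm_nonneg (w : S.sqrtA.domain) : 0 ≤ S.halfNorm w :=
  graphNorm_nonneg S.sqrtA w

theorem norm_le_halfNorm (w : S.sqrtA.domain) : ‖(w : H)‖ ≤ S.halfNorm w :=
  norm_le_graphNorm S.sqrtA w

theorem dualNorm_nonneg (u : H) : 0 ≤ S.dualNorm u :=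
  Real.iSup_nonneg fun _ => norm_nonneg _

theorem norm_inner_le_dualNorm_mul_halfNorm (u : H) (w : S.sqrtA.domain) :
    ‖⟪u, (w : H)⟫‖ ≤ S.dualNorm u * S.halfNorm w := by
  rcases (S.halfNorm_nonneg w).eq_or_lt with zero | pos
  · have : (w : H) = 0 := norm_le_zero_iff.1 ((S.norm_le_halfNorm w).trans_eq zero.symm)
    rw [← zero, this, inner_zero_right, norm_zero, mul_zero]
  · set c : ℂ := ↑(S.halfNorm w)⁻¹
    have norm_c : ‖c‖ = (S.halfNorm w)⁻¹ := Complex.norm_of_nonneg (inv_nonneg.2 pos.le)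
    have unit : S.halfNorm (c • w) ≤ 1 := by
      rw [halfNorm_eq_graphNorm, graphNorm_smul, norm_c]
      exact (inv_mul_cancel₀ pos.ne').le
    have bdd : BddAbove (Set.range fun v : {v // S.halfNorm v ≤ 1} =>
        ‖⟪u, ((v : S.sqrtA.domain) : H)⟫‖) := by
      refine ⟨‖u‖, Set.forall_mem_range.2 fun v => (norm_inner_le_norm _ _).trans ?_⟩
      exact mul_le_of_le_one_right (norm_nonneg _) ((S.norm_le_halfNorm _).trans v.2)
    have le_dual : ‖⟪u, ((c • w : S.sqrtA.domain) : H)⟫‖ ≤ S.dualNorm u :=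
      le_ciSup bdd ⟨c • w, unit⟩
    rwa [Submodule.coe_smul, inner_smul_right, norm_mul, norm_c, inv_mul_le_iff₀' pos] at le_dual

theorem dualNorm_le {M : ℝ} (hM : 0 ≤ M)
    (bound : ∀ w : S.sqrtA.domain, ‖⟪u, (w : H)⟫‖ ≤ M * S.halfNorm w) : S.dualNorm u ≤ M :=
  Real.iSup_le (fun w => (bound w).trans (mul_le_of_le_one_right hM w.2)) hM

theorem dualNorm_le_norm (u : H) : S.dualNorm u ≤ ‖u‖ :=
  S.dualNorm_le (norm_nonneg u) fun w => (norm_inner_le_norm _ _).trans <| by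
    gcongr; exact S.norm_le_halfNorm w

theorem dualNorm_add_le (u v : H) : S.dualNorm (u + v) ≤ S.dualNorm u + S.dualNorm v := by
  refine S.dualNorm_le (add_nonneg (S.dualNorm_nonneg u) (S.dualNorm_nonneg v)) fun w => ?_
  rw [inner_add_left, add_mul]
  exact norm_add_le_of_le (S.norm_inner_le_dualNorm_mul_halfNorm u w)
    (S.norm_inner_le_dualNorm_mul_halfNorm v w)

theorem halfNorm_Pm_le_checkNorm (w : S.sqrtA.domain) :
    S.halfNorm ⟨S.Pm w, S.Pm_half _ w.2⟩ ≤ S.checkNorm w :=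
  le_add_of_nonneg_right (S.dualNorm_nonneg _)

theorem dualNorm_Pp_le_checkNorm (w : S.sqrtA.domain) : S.dualNorm (S.Pp w) ≤ S.checkNorm w :=
  le_add_of_nonneg_left (S.halfNorm_nonneg _)

theorem checkNorm_nonneg (w : S.sqrtA.domain) : 0 ≤ S.checkNorm w :=
  add_nonneg (S.halfNorm_nonneg _) (S.dualNorm_nonneg _)

end Norms

section Duality

variable {S S' : AdaptedOperator H} {B : H →L[ℂ] H} {C : ℝ}

theorem norm_star_apply_le_mul_dualNorm (hB : ∀ w, B w ∈ S.sqrtA.domain) (hC : 0 ≤ C)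
    (bound : ∀ w, S.halfNorm ⟨B w, hB w⟩ ≤ C * ‖w‖) (u : H) :
    ‖star B u‖ ≤ C * S.dualNorm u := by
  have := S.dualNorm_nonneg u
  refine norm_le_of_forall_norm_inner_le dense_univ (by positivity) fun w _ => ?_
  calc ‖⟪star B u, w⟫‖ = ‖⟪u, B w⟫‖ :=
        congrArg norm (ContinuousLinearMap.adjoint_inner_left B w u)
    _ ≤ S.dualNorm u * S.halfNorm ⟨B w, hB w⟩ := S.norm_inner_le_dualNorm_mul_halfNorm u ⟨_, hB w⟩
    _ ≤ S.dualNorm u * (C * ‖w‖) := by gcongr; exact bound w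
    _ = C * S.dualNorm u * ‖w‖ := by ring

theorem dualNorm_star_apply_le_mul_dualNorm (hB : ∀ w ∈ S'.sqrtA.domain, B w ∈ S.sqrtA.domain)
    (hC : 0 ≤ C)
    (bound : ∀ w : S'.sqrtA.domain, S.halfNorm ⟨B w, hB w w.2⟩ ≤ C * S'.halfNorm w) (u : H) :
    S'.dualNorm (star B u) ≤ C * S.dualNorm u := by
  have := S.dualNorm_nonneg u
  refine S'.dualNorm_le (by positivity) fun w => ?_
  calc ‖⟪star B u, (w : H)⟫‖ = ‖⟪u, B w⟫‖ :=
        congrArg norm (ContinuousLinearMap.adjoint_inner_left B (w : H) u)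
    _ ≤ S.dualNorm u * S.halfNorm ⟨B w, hB w w.2⟩ :=
        S.norm_inner_le_dualNorm_mul_halfNorm u ⟨_, hB w w.2⟩
    _ ≤ S.dualNorm u * (C * S'.halfNorm w) := by gcongr; exact bound w
    _ = C * S.dualNorm u * S'.halfNorm w := by ring

end Duality

section Comparison

variable {S S' : AdaptedOperator H} {r : ℝ}

theorem exists_dualNorm_Pp_le (hW : S'.sqrtA.domain = S.sqrtA.domain) :
    ∃ C, 0 ≤ C ∧ ∀ u : S.sqrtA.domain, S'.dualNorm (S'.Pp u) ≤ C * S.checkNorm u := by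
  have Pp_half (w : H) (hw : w ∈ S'.sqrtA.domain) : S'.Pp w ∈ S.sqrtA.domain :=
    hW ▸ S'.Pp_half w hw
  obtain ⟨C, hC, bound⟩ := exists_graphNorm_apply_le_graphNorm S'.isClosed_sqrtA S.isClosed_sqrtA
    S'.Pp Pp_half
  have dual_bound := dualNorm_star_apply_le_mul_dualNorm Pp_half hC bound
  refine ⟨1 + C, by positivity, fun u => ?_⟩
  have Pm_part : S'.dualNorm (S'.Pp (S.Pm u)) ≤ S.checkNorm u :=
    calc S'.dualNorm (S'.Pp (S.Pm u)) ≤ ‖S'.Pp (S.Pm u)‖ := S'.dualNorm_le_norm _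
      _ ≤ ‖S.Pm u‖ := norm_apply_le_of_isStarProjection S'.isStarProjection_Pp _
      _ ≤ S.halfNorm ⟨S.Pm u, S.Pm_half _ u.2⟩ := S.norm_le_halfNorm ⟨S.Pm u, _⟩
      _ ≤ S.checkNorm u := S.halfNorm_Pm_le_checkNorm u
  have Pp_part : S'.dualNorm (S'.Pp (S.Pp u)) ≤ C * S.checkNorm u :=
    calc S'.dualNorm (S'.Pp (S.Pp u)) ≤ C * S.dualNorm (S.Pp u) :=
        S'.Pp_sa.star_eq ▸ dual_bound (S.Pp u)
      _ ≤ C * S.checkNorm u := by gcongr; exact S.dualNorm_Pp_le_checkNorm u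
  calc S'.dualNorm (S'.Pp u) = S'.dualNorm (S'.Pp (S.Pm u) + S'.Pp (S.Pp u)) := by
        rw [← map_add, Pm_apply_add_Pp_apply]
    _ ≤ S'.dualNorm (S'.Pp (S.Pm u)) + S'.dualNorm (S'.Pp (S.Pp u)) := S'.dualNorm_add_le _ _
    _ ≤ S.checkNorm u + C * S.checkNorm u := add_le_add Pm_part Pp_part
    _ = (1 + C) * S.checkNorm u := by ring

theorem exists_halfNorm_Pm_Pp_le_dualNorm
    (hS : S'.A = ((r : ℂ) • LinearMap.id : H →ₗ[ℂ] H) +ᵥ S.A)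
    (hW : S'.sqrtA.domain = S.sqrtA.domain) :
    ∃ C, 0 ≤ C ∧ ∀ u (hu : S'.Pm (S.Pp u) ∈ S'.sqrtA.domain),
      S'.halfNorm ⟨S'.Pm (S.Pp u), hu⟩ ≤ C * S.dualNorm (S.Pp u) := by
  set R := S'.Pm * S.Pp
  have projection : IsStarProjection R := isStarProjection_Pm_mul_Pp hS
  have R_mem (u : H) : R u ∈ S.sqrtA.domain :=
    S.A_domain_le_sqrtA_domain (Pm_mul_Pp_apply_mem_domain hS u)
  have R_mem' (u : H) : R u ∈ S'.sqrtA.domain := hW ▸ R_mem u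
  obtain ⟨C, hC, bound⟩ := exists_graphNorm_apply_le_norm S.isClosed_sqrtA R R_mem
  obtain ⟨C', hC', bound'⟩ := exists_graphNorm_apply_le_norm S'.isClosed_sqrtA R R_mem'
  refine ⟨C' * C, by positivity, fun u _ => ?_⟩
  have R_R : R (R u) = R u := DFunLike.congr_fun projection.isIdempotentElem.eq u
  have R_Pp : R (S.Pp u) = R u := congrArg S'.Pm (DFunLike.congr_fun S.Pp_idem u)
  have R_le := norm_star_apply_le_mul_dualNorm R_mem hC bound (S.Pp u)
  rw [projection.isSelfAdjoint.star_eq, R_Pp] at R_le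
  calc S'.halfNorm ⟨R u, _⟩ = graphNorm S'.sqrtA ⟨R (R u), R_mem' (R u)⟩ := by simp only [R_R]; rfl
    _ ≤ C' * ‖R u‖ := bound' (R u)
    _ ≤ C' * (C * S.dualNorm (S.Pp u)) := by gcongr
    _ = C' * C * S.dualNorm (S.Pp u) := (mul_assoc _ _ _).symm

theorem exists_halfNorm_Pm_le (hS : S'.A = ((r : ℂ) • LinearMap.id : H →ₗ[ℂ] H) +ᵥ S.A)
    (hW : S'.sqrtA.domain = S.sqrtA.domain) :
    ∃ C, 0 ≤ C ∧ ∀ (u : S.sqrtA.domain) (hu : S'.Pm u ∈ S'.sqrtA.domain),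
      S'.halfNorm ⟨S'.Pm u, hu⟩ ≤ C * S.checkNorm u := by
  have Pm_half (w : H) (hw : w ∈ S.sqrtA.domain) : S'.Pm w ∈ S'.sqrtA.domain :=
    S'.Pm_half w (hW ▸ hw)
  obtain ⟨C, hC, bound⟩ := exists_graphNorm_apply_le_graphNorm S.isClosed_sqrtA S'.isClosed_sqrtA
    S'.Pm Pm_half
  obtain ⟨C', hC', bound'⟩ := exists_halfNorm_Pm_Pp_le_dualNorm hS hW
  refine ⟨C + C', by positivity, fun u _ => ?_⟩
  have Pm_Pm_mem := Pm_half _ (S.Pm_half _ u.2)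
  have Pm_Pp_mem := Pm_half _ (S.Pp_half _ u.2)
  calc S'.halfNorm ⟨S'.Pm u, _⟩
      = graphNorm S'.sqrtA (⟨S'.Pm (S.Pm u), Pm_Pm_mem⟩ + ⟨S'.Pm (S.Pp u), Pm_Pp_mem⟩) := by
        rw [halfNorm_eq_graphNorm]
        simp only [AddMemClass.mk_add_mk, ← map_add, Pm_apply_add_Pp_apply]
    _ ≤ S'.halfNorm ⟨S'.Pm (S.Pm u), Pm_Pm_mem⟩ + S'.halfNorm ⟨S'.Pm (S.Pp u), Pm_Pp_mem⟩ :=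
        graphNorm_add_le _ _ _
    _ ≤ C * S.halfNorm ⟨S.Pm u, S.Pm_half _ u.2⟩ + C' * S.dualNorm (S.Pp u) :=
        add_le_add (bound ⟨S.Pm u, S.Pm_half _ u.2⟩) (bound' u Pm_Pp_mem)
    _ ≤ C * S.checkNorm u + C' * S.checkNorm u := by
        gcongr
        exacts [S.halfNorm_Pm_le_checkNorm u, S.dualNorm_Pp_le_checkNorm u]
    _ = (C + C') * S.checkNorm u := (add_mul _ _ _).symm

theorem exists_checkNorm_le (hS : S'.A = ((r : ℂ) • LinearMap.id : H →ₗ[ℂ] H) +ᵥ S.A)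
    (hW : S'.sqrtA.domain = S.sqrtA.domain) :
    ∃ C, 0 < C ∧ ∀ u (hu : u ∈ S.sqrtA.domain) (hu' : u ∈ S'.sqrtA.domain),
      S'.checkNorm ⟨u, hu'⟩ ≤ C * S.checkNorm ⟨u, hu⟩ := by
  obtain ⟨C, hC, half_le⟩ := exists_halfNorm_Pm_le hS hW
  obtain ⟨C', hC', dual_le⟩ := exists_dualNorm_Pp_le hW
  refine ⟨C + C' + 1, by positivity, fun u hu hu' => ?_⟩
  calc S'.checkNorm ⟨u, hu'⟩ ≤ C * S.checkNorm ⟨u, hu⟩ + C' * S.checkNorm ⟨u, hu⟩ :=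
        add_le_add (half_le ⟨u, hu⟩ _) (dual_le ⟨u, hu⟩)
    _ ≤ (C + C' + 1) * S.checkNorm ⟨u, hu⟩ := by linarith [S.checkNorm_nonneg ⟨u, hu⟩]

end Comparison

end AdaptedOperator

/-- **Proposition: invariance of `Ȟ(T)` under real shifts.**
Let `T` be a selfadjoint operator on a Hilbert space `H` and `T_r := T − r`
for `r ∈ ℝ`.  Then `Ȟ(T_r) = Ȟ(T)` as sets, with equivalence of norms.

Here `ST` and `STr` are the spectral packages of `T` and `T_r` (comprising the
spectral projections `χ∓`, the modulus and its square root, with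
`dom |T_r|^{1/2} = dom |T|^{1/2}`), and `checkNorm` is the `Ȟ`-norm
`‖χ⁻ u‖_{dom |·|^{1/2}} + ‖χ⁺ u‖_{dom |·|^{1/2}^*}` on the common dense
subspace `dom |T|^{1/2}`; since `Ȟ(T)` and `Ȟ(T_r)` are the completions of
`dom |T|^{1/2}` in the respective norms, the two-sided norm equivalence below
expresses that `Ȟ(T_r) = Ȟ(T)` with equivalent norms. -/
theorem statement19_check_space_shift_invariance
    (ST STr : AdaptedOperator H) (r : ℝ)
    -- `T_r = T − r`: same domain, shifted values:
    (hdom : STr.A.domain = ST.A.domain)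
    (hshift : ∀ (u : H) (h : u ∈ ST.A.domain) (h' : u ∈ STr.A.domain),
      STr.A ⟨u, h'⟩ = ST.A ⟨u, h⟩ - (r : ℂ) • u)
    -- `dom |T_r|^{1/2} = dom |T|^{1/2}`:
    (hW : STr.sqrtA.domain = ST.sqrtA.domain) :
    ∃ c C : ℝ, 0 < c ∧
      ∀ u : ST.sqrtA.domain,
        c * ST.checkNorm u ≤ STr.checkNorm ⟨(u : H), by rw [hW]; exact u.2⟩ ∧
        STr.checkNorm ⟨(u : H), by rw [hW]; exact u.2⟩ ≤ C * ST.checkNorm u := by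
  have shift : STr.A = (((-r : ℝ) : ℂ) • LinearMap.id : H →ₗ[ℂ] H) +ᵥ ST.A :=
    LinearPMap.ext hdom fun u h' h => by
      rw [hshift u h h', LinearPMap.vadd_apply]
      simp [sub_eq_neg_add]
  have shift_symm : ST.A = ((r : ℂ) • LinearMap.id : H →ₗ[ℂ] H) +ᵥ STr.A := by
    rw [shift, vadd_vadd, ← add_smul]
    simp
  obtain ⟨C, -, le⟩ := AdaptedOperator.exists_checkNorm_le shift hW
  obtain ⟨C', hC', ge⟩ := AdaptedOperator.exists_checkNorm_le shift_symm hW.symm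
  refine ⟨C'⁻¹, C, inv_pos.2 hC', fun u => ⟨?_, le u u.2 _⟩⟩
  exact (inv_mul_le_iff₀ hC').2 (ge u _ u.2)

end Shift

end BVP
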